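/- arXiv:math/0510273 — 2 statements merged into one kernel-verified Lean document; each statement's English description precedes it below -/
import Mathlib

section
/- Let F be a distribution on [0,∞) with unbounded support. If (F*F)‾(x)/F̄(x) → c as x → ∞, where c ∈ (0,∞], then c = 2φ(γ̂), where φ is the Laplace transform of F and γ̂ = sup{γ : φ(γ) < ∞}. -/
open MeasureTheory Filter Real Set
open scoped ENNReal Topology

noncomputable section

/-- Convolution of two measures on ℝ: distribution of the sum of independent r.v.'s. -/
def mconv (μ ν : MeasureTheory.Measure ℝ) : MeasureTheory.Measure ℝ :=
  MeasureTheory.Measure.map (fun p : ℝ × ℝ => p.1 + p.2) (μ.prod ν)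

/-- The tail F̄(x) = F(x,∞). -/
def tail (F : MeasureTheory.Measure ℝ) (x : ℝ) : ℝ≥0∞ := F (Set.Ioi x)

/-- Laplace transform φ(γ) = ∫ e^{γx} F(dx), with value in [0,∞]. -/
def phi (F : MeasureTheory.Measure ℝ) (γ : ℝ) : ℝ≥0∞ :=
  ∫⁻ x, ENNReal.ofReal (Real.exp (γ * x)) ∂F

/-- F is heavy-tailed: φ(γ) = ∞ for every γ > 0. -/
def IsHeavyTailed (F : MeasureTheory.Measure ℝ) : Prop :=
  ∀ γ : ℝ, 0 < γ → phi F γ = ⊤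

/-- γ̂ = sup{γ : φ(γ) < ∞} ∈ [0,∞] (for distributions on [0,∞)). -/
def gammaHat (F : MeasureTheory.Measure ℝ) : ℝ≥0∞ :=
  sSup {p : ℝ≥0∞ | ∃ γ : ℝ, p = ENNReal.ofReal γ ∧ phi F γ < ⊤}

/-- φ(γ̂) = lim_{γ↑γ̂} φ(γ), realized (by monotonicity of φ) as sup over γ < γ̂. -/
def phiHat (F : MeasureTheory.Measure ℝ) : ℝ≥0∞ :=
  ⨆ (γ : ℝ) (_ : ENNReal.ofReal γ < gammaHat F ∨ γ < 0), phi F γ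


lemma cmp_lemma (μ ν : Measure ℝ) (K : ℝ≥0∞) (g : ℝ → ℝ) (hg : Continuous g) (hm : Monotone g)
    (h0 : ∀ x, 0 ≤ g x) (x0 : ℝ) (h : ∀ x, x0 ≤ x → μ (Ioi x) ≤ K * ν (Ioi x)) :
    ∫⁻ x, ENNReal.ofReal (g x) ∂μ ≤
      ENNReal.ofReal (g x0) * μ univ + K * ∫⁻ x, ENNReal.ofReal (g x) ∂ν := by
  set f : ℝ → ℝ := fun x => max (g x - g x0) 0 with hf
  have hfc : Continuous f := by fun_prop
  have hf0 : ∀ x, 0 ≤ f x := fun x => le_max_right _ _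
  have hfm : Monotone f := fun x y hxy => max_le_max (by linarith [hm hxy]) le_rfl
  have hfx0 : f x0 = 0 := by simp [hf]
  have h1 : ∫⁻ x, ENNReal.ofReal (g x) ∂μ ≤
      ENNReal.ofReal (g x0) * μ univ + ∫⁻ x, ENNReal.ofReal (f x) ∂μ := by
    rw [← lintegral_const, ← lintegral_add_left measurable_const]
    apply lintegral_mono
    intro x
    simp only
    rw [← ENNReal.ofReal_add (h0 _) (hf0 _)]
    apply ENNReal.ofReal_le_ofReal
    have := le_max_left (g x - g x0) 0
    simp only [hf]; linarith
  have h2 : ∫⁻ x, ENNReal.ofReal (f x) ∂ν ≤ ∫⁻ x, ENNReal.ofReal (g x) ∂ν := by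
    apply lintegral_mono
    intro x
    apply ENNReal.ofReal_le_ofReal
    exact max_le (by linarith [h0 x0]) (h0 x)
  have h3 : ∫⁻ x, ENNReal.ofReal (f x) ∂μ ≤ K * ∫⁻ x, ENNReal.ofReal (f x) ∂ν := by
    rw [lintegral_eq_lintegral_meas_lt μ (Eventually.of_forall hf0) hfc.aemeasurable,
      lintegral_eq_lintegral_meas_lt ν (Eventually.of_forall hf0) hfc.aemeasurable]
    have hmeas : Measurable fun t : ℝ => ν {a | t < f a} := by
      apply Antitone.measurable
      intro s t hst
      exact measure_mono fun a ha => lt_of_le_of_lt hst ha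
    rw [← lintegral_const_mul _ hmeas]
    apply setLIntegral_mono (hmeas.const_mul _)
    intro t ht
    set U := {a | t < f a} with hU
    have hx0U : ∀ a ∈ U, x0 ≤ a := by
      intro a ha
      by_contra hlt
      push Not at hlt
      have h1 := hfm hlt.le
      have h2 : t < f a := ha
      have h3 : 0 < t := ht
      linarith
    have hUo : IsOpen U := isOpen_lt continuous_const hfc
    rcases U.eq_empty_or_nonempty with he | hne
    · rw [he]; simp
    have hb : BddBelow U := ⟨x0, hx0U⟩
    have hUeq : U = Ioi (sInf U) := by
      ext a
      constructor
      · intro ha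
        refine lt_of_le_of_ne (csInf_le hb ha) ?_
        intro heq
        obtain ⟨e, he, hball⟩ := Metric.isOpen_iff.1 hUo a ha
        have : a - e / 2 ∈ U := hball (by
          rw [Metric.mem_ball, Real.dist_eq]
          rw [abs_lt]; constructor <;> linarith)
        have := csInf_le hb this
        linarith
      · intro ha
        obtain ⟨b, hbU, hba⟩ := exists_lt_of_csInf_lt hne ha
        exact lt_of_lt_of_le hbU (hfm hba.le)
    rw [hUeq]
    exact h _ (le_csInf hne hx0U)
  calc _ ≤ _ := h1
    _ ≤ _ := by gcongr; exact h3.trans (by gcongr)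

lemma ae_nonneg_of (F : Measure ℝ) (hsupp : F (Set.Iio 0) = 0) : ∀ᵐ x ∂F, 0 ≤ x := by
  rw [ae_iff]
  simpa [Set.Iio] using hsupp

lemma lint_mconv (F : Measure ℝ) [IsProbabilityMeasure F] (f : ℝ → ℝ≥0∞) (hf : Measurable f) :
    ∫⁻ z, f z ∂(mconv F F) = ∫⁻ x, ∫⁻ y, f (x + y) ∂F ∂F := by
  unfold mconv
  rw [lintegral_map hf (by fun_prop), lintegral_prod]
  exact (hf.comp (by fun_prop)).aemeasurable

lemma mconv_univ (F : Measure ℝ) [IsProbabilityMeasure F] : mconv F F univ = 1 := by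
  unfold mconv
  rw [Measure.map_apply (by fun_prop) MeasurableSet.univ]
  simp

lemma phi_mono (F : Measure ℝ) (hF : ∀ᵐ x ∂F, 0 ≤ x) {a b : ℝ} (hab : a ≤ b) :
    phi F a ≤ phi F b := by
  apply lintegral_mono_ae
  filter_upwards [hF] with x hx
  gcongr

lemma phi_ge (F : Measure ℝ) {a : ℝ} (ha : 0 ≤ a) (x : ℝ) :
    ENNReal.ofReal (exp (a * x)) * tail F x ≤ phi F a := by
  unfold phi tail
  rw [← setLIntegral_const]
  refine le_trans ?_ (setLIntegral_le_lintegral (Ioi x) _)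
  apply setLIntegral_mono (by fun_prop)
  intro y hy
  have : x ≤ y := le_of_lt hy
  gcongr

lemma phi_fin (F : Measure ℝ) [IsProbabilityMeasure F] (hF : ∀ᵐ x ∂F, 0 ≤ x) {a : ℝ}
    (ha : ENNReal.ofReal a < gammaHat F ∨ a < 0) : phi F a < ⊤ := by
  rcases ha with ha | ha
  · obtain ⟨p, ⟨b, rfl, hb⟩, hlt⟩ := lt_sSup_iff.1 ha
    refine lt_of_le_of_lt (phi_mono F hF ?_) hb
    by_contra hc
    push Not at hc
    exact absurd (ENNReal.ofReal_le_ofReal hc.le) (not_le.2 hlt)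
  · refine lt_of_le_of_lt (phi_mono F hF ha.le) ?_
    simp [phi]

lemma caseI (F : Measure ℝ) [IsProbabilityMeasure F] (hF : ∀ᵐ x ∂F, 0 ≤ x)
    (hub : ∀ x : ℝ, tail F x ≠ 0) (K : ℝ≥0∞) (hK : K ≠ ⊤) (x0 : ℝ)
    (h : ∀ x, x0 ≤ x → tail (mconv F F) x ≤ K * tail F x) : phiHat F ≠ ⊤ := by
  have hb : ∀ a : ℝ, (ENNReal.ofReal a < gammaHat F ∨ a < 0) →
      phi F a ≤ 1 + ((tail F x0)⁻¹ + K) := by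
    intro a ha
    rcases lt_or_ge a 0 with hneg | hpos
    · refine le_trans (phi_mono F hF hneg.le) ?_
      simp [phi]
    have hfin := phi_fin F hF ha
    have h1 := cmp_lemma (mconv F F) F K (fun x => exp (a * x)) (by fun_prop)
      (fun x y hxy => by dsimp only; gcongr) (fun x => (exp_pos _).le) x0 h
    rw [mconv_univ, mul_one, lint_mconv F _ (by fun_prop)] at h1
    have h2 : ∫⁻ x, ∫⁻ y, ENNReal.ofReal (exp (a * (x + y))) ∂F ∂F = phi F a * phi F a := by
      have : ∀ x y : ℝ, ENNReal.ofReal (exp (a * (x + y))) =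
          ENNReal.ofReal (exp (a * x)) * ENNReal.ofReal (exp (a * y)) := by
        intro x y
        rw [← ENNReal.ofReal_mul (exp_pos _).le, ← exp_add, mul_add]
      simp_rw [this]
      conv_lhs => enter [2, x]; rw [lintegral_const_mul _ (by fun_prop)]
      rw [lintegral_mul_const _ (by fun_prop)]
      rfl
    rw [h2] at h1
    have hT : tail F x0 ≠ ⊤ := measure_ne_top _ _
    have h3 : ENNReal.ofReal (exp (a * x0)) ≤ (tail F x0)⁻¹ * phi F a := by
      have := phi_ge F hpos x0
      rw [mul_comm (tail F x0)⁻¹, ← div_eq_mul_inv]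
      exact (ENNReal.le_div_iff_mul_le (Or.inl (hub x0)) (Or.inl hT)).2 this
    have h4 : phi F a * phi F a ≤ ((tail F x0)⁻¹ + K) * phi F a := by
      rw [add_mul]
      exact h1.trans (add_le_add h3 le_rfl)
    have h0 : phi F a ≠ 0 := by
      intro h0
      have := phi_ge F hpos x0
      rw [h0] at this
      have := le_antisymm this (zero_le)
      rcases mul_eq_zero.1 this with h | h
      · rw [ENNReal.ofReal_eq_zero] at h
        exact absurd (exp_pos (a * x0)) (not_lt.2 h)
      · exact hub _ h
    exact ((ENNReal.mul_le_mul_iff_left h0 hfin.ne).1 h4).trans le_add_self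
  have : phiHat F ≤ 1 + ((tail F x0)⁻¹ + K) := iSup₂_le hb
  refine ne_top_of_le_ne_top ?_ this
  simp [hK, hub x0]

def ww (γ ε M x : ℝ) : ℝ := exp (γ * max x 0 + min (ε * max x 0) M)

lemma ww_cont (γ ε M : ℝ) : Continuous (ww γ ε M) := by unfold ww; fun_prop

lemma ww_mono {γ ε : ℝ} (M : ℝ) (hγ : 0 ≤ γ) (hε : 0 ≤ ε) : Monotone (ww γ ε M) := by
  intro x y hxy
  unfold ww
  have : max x 0 ≤ max y 0 := max_le_max hxy le_rfl
  gcongr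

lemma ww_sub {γ ε M : ℝ} (hε : 0 ≤ ε) (hM : 0 ≤ M) {x y : ℝ} (hx : 0 ≤ x) (hy : 0 ≤ y) :
    ww γ ε M (x + y) ≤ ww γ ε M x * ww γ ε M y := by
  unfold ww
  rw [← exp_add, max_eq_left hx, max_eq_left hy, max_eq_left (add_nonneg hx hy)]
  apply exp_le_exp.2
  have : min (ε * (x + y)) M ≤ min (ε * x) M + min (ε * y) M := by
    have h1 := mul_nonneg hε hx
    have h2 := mul_nonneg hε hy
    rw [mul_add]
    rcases min_cases (ε * x) M with h | h <;> rcases min_cases (ε * y) M with h' | h' <;>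
    rcases min_cases (ε * x + ε * y) M with h'' | h'' <;> linarith
  linarith

lemma ww_sup {γ ε M : ℝ} (hε : 0 ≤ ε) {x y : ℝ} (hx : 0 ≤ x) (hy : 0 ≤ y) :
    ww γ ε M x * exp (γ * y) ≤ ww γ ε M (x + y) := by
  unfold ww
  rw [← exp_add, max_eq_left hx, max_eq_left (add_nonneg hx hy)]
  apply exp_le_exp.2
  have : min (ε * x) M ≤ min (ε * (x + y)) M := by gcongr; linarith
  linarith

lemma ww_step (γ ε M s x : ℝ) (hs : 0 ≤ s) : ww γ ε (M + s) x ≤ exp s * ww γ ε M x := by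
  unfold ww
  rw [← exp_add]
  apply exp_le_exp.2
  have : min (ε * max x 0) (M + s) ≤ min (ε * max x 0) M + s := by
    rcases min_cases (ε * max x 0) (M + s) with h | h <;>
    rcases min_cases (ε * max x 0) M with h' | h' <;> linarith
  linarith

lemma ww_exists_large (F : Measure ℝ) (hF : ∀ᵐ x ∂F, 0 ≤ x)
    (γ ε s : ℝ) (hs : 0 < s) (htop : phi F (γ + ε) = ⊤) (b : ℝ) :
    ∃ n : ℕ, ENNReal.ofReal b < ∫⁻ x, ENNReal.ofReal (ww γ ε (n * s) x) ∂F := by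
  by_contra hcon
  push Not at hcon
  have h1 := lintegral_liminf_le (u := atTop) (μ := F)
    (f := fun (n : ℕ) x => ENNReal.ofReal (ww γ ε (n * s) x))
    (fun n => (ww_cont _ _ _).measurable.ennreal_ofReal)
  have h2 : phi F (γ + ε) ≤
      ∫⁻ x, liminf (fun n : ℕ => ENNReal.ofReal (ww γ ε (n * s) x)) atTop ∂F := by
    apply lintegral_mono_ae
    filter_upwards [hF] with x hx
    have : Tendsto (fun n : ℕ => ENNReal.ofReal (ww γ ε (n * s) x)) atTop
        (𝓝 (ENNReal.ofReal (exp ((γ + ε) * x)))) := by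
      apply tendsto_const_nhds.congr'
      have hN : Tendsto (fun n : ℕ => (n : ℝ) * s) atTop atTop :=
        tendsto_natCast_atTop_atTop.atTop_mul_const hs
      filter_upwards [hN.eventually_ge_atTop (ε * x)] with n hn
      unfold ww
      rw [max_eq_left hx, min_eq_left hn, add_mul]
    exact this.liminf_eq.ge
  have h3 : liminf (fun n : ℕ => ∫⁻ x, ENNReal.ofReal (ww γ ε (n * s) x) ∂F) atTop
      ≤ ENNReal.ofReal b := by
    refine le_trans (liminf_le_liminf (Eventually.of_forall hcon)) ?_
    simp
  have := h2.trans (h1.trans h3)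
  rw [htop] at this
  exact absurd this (by simp)


def gg (γ ε M A x : ℝ) : ℝ := min (max x 0) A * ww γ ε M x

lemma ww_pos (γ ε M x : ℝ) : 0 < ww γ ε M x := exp_pos _

lemma gg_cont (γ ε M A : ℝ) : Continuous (gg γ ε M A) := by
  have := ww_cont γ ε M
  unfold gg; fun_prop

lemma gg_nonneg {γ ε M A : ℝ} (hA : 0 ≤ A) (x : ℝ) : 0 ≤ gg γ ε M A x :=
  mul_nonneg (le_min (le_max_right _ _) hA) (ww_pos _ _ _ _).le

lemma gg_mono {γ ε M A : ℝ} (hA : 0 ≤ A) (hγ : 0 ≤ γ) (hε : 0 ≤ ε) :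
    Monotone (gg γ ε M A) := by
  intro x y hxy
  unfold gg
  have h1 := ww_mono M hγ hε hxy
  have h2 : min (max x 0) A ≤ min (max y 0) A := min_le_min (max_le_max hxy le_rfl) le_rfl
  exact mul_le_mul h2 h1 (ww_pos _ _ _ _).le (le_min (le_max_right _ _) hA)

lemma gg_sub {γ ε M A : ℝ} (hA : 0 ≤ A) (hε : 0 ≤ ε) (hM : 0 ≤ M) {x y : ℝ}
    (hx : 0 ≤ x) (hy : 0 ≤ y) :
    gg γ ε M A (x + y) ≤ gg γ ε M A x * ww γ ε M y + ww γ ε M x * gg γ ε M A y := by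
  unfold gg
  have h1 := ww_sub (γ := γ) hε hM hx hy
  rw [max_eq_left hx, max_eq_left hy, max_eq_left (add_nonneg hx hy)]
  have h2 : min (x + y) A ≤ min x A + min y A := by
    rcases min_cases x A with h | h <;> rcases min_cases y A with h' | h' <;>
    rcases min_cases (x + y) A with h'' | h'' <;> linarith
  have h3 : 0 ≤ min x A + min y A := add_nonneg (le_min hx hA) (le_min hy hA)
  calc _ ≤ (min x A + min y A) * (ww γ ε M x * ww γ ε M y) :=
        mul_le_mul h2 h1 (ww_pos _ _ _ _).le h3
    _ = _ := by ring

lemma gg_sup {γ ε M A : ℝ} (hA : 0 ≤ A) (hε : 0 ≤ ε) {x y : ℝ}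
    (hx : 0 ≤ x) (hy : 0 ≤ y) :
    gg γ ε M A x * exp (γ * y) ≤ gg γ ε M A (x + y) := by
  unfold gg
  have h1 := ww_sup (γ := γ) (M := M) hε hx hy
  rw [max_eq_left hx, max_eq_left (add_nonneg hx hy), mul_assoc]
  have h2 : min x A ≤ min (x + y) A := min_le_min (by linarith) le_rfl
  exact mul_le_mul h2 h1 (mul_pos (ww_pos _ _ _ _) (exp_pos _)).le
    (le_min (by linarith) hA)

lemma key (F : Measure ℝ) (hF : ∀ᵐ x ∂F, 0 ≤ x) {γ p : ℝ}
    (hp0 : 0 ≤ p) (hp : phi F γ = ENNReal.ofReal p) (htop : ∀ ε : ℝ, 0 < ε → phi F (γ + ε) = ⊤)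
    {δ B : ℝ} (hδ : 0 < δ) (hB : 0 ≤ B) (n : ℝ) :
    ∃ ε M A : ℝ, 0 ≤ ε ∧ 0 ≤ M ∧ 0 ≤ A ∧
      ∫⁻ x, ENNReal.ofReal (ww γ ε M x) ∂F ≤ ENNReal.ofReal (p + δ) ∧
      gg γ ε M A B ≤ B * exp (γ * B + 1) ∧
      ∫⁻ x, ENNReal.ofReal (gg γ ε M A x) ∂F ≠ ⊤ ∧
      ENNReal.ofReal n ≤ ∫⁻ x, ENNReal.ofReal (gg γ ε M A x) ∂F := by
  obtain ⟨A, hA0, hAn⟩ : ∃ A : ℝ, 0 ≤ A ∧ n ≤ A * (δ / 4) :=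
    ⟨max (n / (δ / 4)) 0, le_max_right _ _, by
      rw [← div_le_iff₀ (by linarith)]; exact le_max_left _ _⟩
  obtain ⟨s, hs, hs'⟩ : ∃ s : ℝ, 0 < s ∧ exp s * (p + δ / 2) ≤ p + δ := by
    have hc : Continuous fun s : ℝ => exp s * (p + δ / 2) := by fun_prop
    have ht := (hc.tendsto 0).mono_left (nhdsWithin_le_nhds (s := Ioi 0))
    have := ht.eventually_lt_const (u := p + δ) (by rw [exp_zero]; linarith)
    obtain ⟨s, h1, h2⟩ := (this.and self_mem_nhdsWithin).exists
    exact ⟨s, h2, h1.le⟩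
  obtain ⟨ε, hε, hε1, hε2⟩ : ∃ ε : ℝ, 0 < ε ∧ exp (ε * A) * p ≤ p + δ / 4 ∧ ε * B ≤ 1 := by
    have hc : Continuous fun s : ℝ => exp (s * A) * p := by fun_prop
    have hc' : Continuous fun s : ℝ => s * B := by fun_prop
    have ht := (hc.tendsto 0).mono_left (nhdsWithin_le_nhds (s := Ioi 0))
    have ht' := (hc'.tendsto 0).mono_left (nhdsWithin_le_nhds (s := Ioi 0))
    have h3 := ht.eventually_lt_const (u := p + δ / 4) (by rw [zero_mul, exp_zero]; linarith)
    have h4 := ht'.eventually_lt_const (u := 1) (by rw [zero_mul]; exact one_pos)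
    obtain ⟨s, ⟨h1, h1'⟩, h2⟩ := ((h3.and h4).and self_mem_nhdsWithin).exists
    exact ⟨s, h2, h1.le, h1'.le⟩
  have hex := ww_exists_large F hF γ ε s hs (htop ε hε) (p + δ / 2)
  classical
  set m := Nat.find hex with hm
  have hm1 := Nat.find_spec hex
  have hm0 : m ≠ 0 := by
    intro h0
    rw [← hm, h0] at hm1
    have : ∫⁻ x, ENNReal.ofReal (ww γ ε ((0 : ℕ) * s) x) ∂F = phi F γ := by
      apply lintegral_congr_ae
      filter_upwards [hF] with x hx
      unfold ww
      rw [max_eq_left hx, Nat.cast_zero, zero_mul, min_eq_right (mul_nonneg hε.le hx), add_zero]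
    rw [this, hp] at hm1
    exact absurd (ENNReal.ofReal_le_ofReal (show p ≤ p + δ / 2 by linarith)) (not_le.2 hm1)
  obtain ⟨k, hk⟩ := Nat.exists_eq_succ_of_ne_zero hm0
  have hm2 : ∫⁻ x, ENNReal.ofReal (ww γ ε (k * s) x) ∂F ≤ ENNReal.ofReal (p + δ / 2) :=
    not_lt.1 (Nat.find_min hex (show k < Nat.find hex by rw [← hm, hk]; exact Nat.lt_succ_self k))
  rw [← hm] at hm1
  set M : ℝ := m * s with hM
  have hM0 : 0 ≤ M := by positivity
  have hMk : M = k * s + s := by rw [hM, hk]; push_cast; ring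
  have hwm : Measurable fun x => ENNReal.ofReal (ww γ ε M x) :=
    (ww_cont _ _ _).measurable.ennreal_ofReal
  have hW : ∫⁻ x, ENNReal.ofReal (ww γ ε M x) ∂F ≤ ENNReal.ofReal (p + δ) := by
    calc ∫⁻ x, ENNReal.ofReal (ww γ ε M x) ∂F
        ≤ ∫⁻ x, ENNReal.ofReal (exp s) * ENNReal.ofReal (ww γ ε (k * s) x) ∂F := by
          apply lintegral_mono
          intro x
          simp only
          rw [← ENNReal.ofReal_mul (exp_pos _).le, hMk]
          exact ENNReal.ofReal_le_ofReal (ww_step _ _ _ _ _ hs.le)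
      _ = ENNReal.ofReal (exp s) * ∫⁻ x, ENNReal.ofReal (ww γ ε (k * s) x) ∂F :=
          lintegral_const_mul _ (ww_cont _ _ _).measurable.ennreal_ofReal
      _ ≤ ENNReal.ofReal (exp s) * ENNReal.ofReal (p + δ / 2) := by gcongr
      _ ≤ _ := by
          rw [← ENNReal.ofReal_mul (exp_pos _).le]
          exact ENNReal.ofReal_le_ofReal hs'
  refine ⟨ε, M, A, hε.le, hM0, hA0, hW, ?_, ?_, ?_⟩
  · unfold gg ww
    rw [max_eq_left hB]
    have : min (ε * B) M ≤ 1 := (min_le_left _ _).trans hε2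
    have h2 : min B A ≤ B := min_le_left _ _
    gcongr
  · have : ∫⁻ x, ENNReal.ofReal (gg γ ε M A x) ∂F ≤
        ENNReal.ofReal A * ∫⁻ x, ENNReal.ofReal (ww γ ε M x) ∂F := by
      rw [← lintegral_const_mul _ hwm]
      apply lintegral_mono
      intro x
      simp only
      rw [← ENNReal.ofReal_mul hA0]
      apply ENNReal.ofReal_le_ofReal
      unfold gg
      exact mul_le_mul_of_nonneg_right (min_le_right _ _) (ww_pos _ _ _ _).le
    exact ne_top_of_le_ne_top (ENNReal.mul_ne_top ENNReal.ofReal_ne_top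
      (ne_top_of_le_ne_top ENNReal.ofReal_ne_top hW)) this
  · have hsplit := lintegral_add_compl (μ := F) (fun x => ENNReal.ofReal (ww γ ε M x))
      (measurableSet_Iic (a := A))
    rw [compl_Iic] at hsplit
    have h1 : ∫⁻ x in Iic A, ENNReal.ofReal (ww γ ε M x) ∂F ≤ ENNReal.ofReal (p + δ / 4) := by
      calc ∫⁻ x in Iic A, ENNReal.ofReal (ww γ ε M x) ∂F
          ≤ ∫⁻ x in Iic A, ENNReal.ofReal (exp (ε * A)) *
              ENNReal.ofReal (exp (γ * x)) ∂F := by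
            apply lintegral_mono_ae
            filter_upwards [ae_restrict_of_ae hF, ae_restrict_mem measurableSet_Iic] with x hx hxA
            rw [← ENNReal.ofReal_mul (exp_pos _).le, ← exp_add]
            apply ENNReal.ofReal_le_ofReal
            unfold ww
            rw [max_eq_left hx]
            apply exp_le_exp.2
            have h1 : min (ε * x) M ≤ ε * x := min_le_left _ _
            have h2 : ε * x ≤ ε * A := mul_le_mul_of_nonneg_left hxA hε.le
            linarith
        _ ≤ ∫⁻ x, ENNReal.ofReal (exp (ε * A)) * ENNReal.ofReal (exp (γ * x)) ∂F :=
            setLIntegral_le_lintegral _ _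
        _ = ENNReal.ofReal (exp (ε * A)) * phi F γ := lintegral_const_mul _ (by fun_prop)
        _ ≤ _ := by
            rw [hp, ← ENNReal.ofReal_mul (exp_pos _).le]
            exact ENNReal.ofReal_le_ofReal hε1
    have h2 : ENNReal.ofReal (δ / 4) ≤ ∫⁻ x in Ioi A, ENNReal.ofReal (ww γ ε M x) ∂F := by
      have h3 : ENNReal.ofReal (p + δ / 4) + ENNReal.ofReal (δ / 4) ≤
          ENNReal.ofReal (p + δ / 4) + ∫⁻ x in Ioi A, ENNReal.ofReal (ww γ ε M x) ∂F := by
        rw [← ENNReal.ofReal_add (by linarith) (by linarith)]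
        calc _ = ENNReal.ofReal (p + δ / 2) := by congr 1; ring
          _ ≤ _ := hm1.le
          _ = _ := hsplit.symm
          _ ≤ _ := by gcongr
      exact (ENNReal.add_le_add_iff_left ENNReal.ofReal_ne_top).1 h3
    calc ENNReal.ofReal n ≤ ENNReal.ofReal A * ENNReal.ofReal (δ / 4) := by
          rw [← ENNReal.ofReal_mul hA0]; exact ENNReal.ofReal_le_ofReal hAn
      _ ≤ ENNReal.ofReal A * ∫⁻ x in Ioi A, ENNReal.ofReal (ww γ ε M x) ∂F := by gcongr
      _ = ∫⁻ x in Ioi A, ENNReal.ofReal A * ENNReal.ofReal (ww γ ε M x) ∂F :=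
          (lintegral_const_mul _ hwm).symm
      _ ≤ ∫⁻ x in Ioi A, ENNReal.ofReal (gg γ ε M A x) ∂F := by
          apply setLIntegral_mono (gg_cont _ _ _ _).measurable.ennreal_ofReal
          intro x hx
          have hx' : A < x := hx
          rw [← ENNReal.ofReal_mul hA0]
          apply ENNReal.ofReal_le_ofReal
          unfold gg
          rw [min_eq_right (hx'.le.trans (le_max_left _ _))]
      _ ≤ _ := setLIntegral_le_lintegral _ _

/-- Upper bound. -/
lemma upper (F : Measure ℝ) [IsProbabilityMeasure F] (hF : ∀ᵐ x ∂F, 0 ≤ x) {γ p : ℝ}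
    (hγ : 0 ≤ γ)
    (hp0 : 0 ≤ p) (hp : phi F γ = ENNReal.ofReal p) (htop : ∀ ε : ℝ, 0 < ε → phi F (γ + ε) = ⊤)
    {r B : ℝ} (hr : 2 * p < r) (hB : 0 ≤ B)
    (h : ∀ x, B ≤ x → tail F x ≤ ENNReal.ofReal r⁻¹ * tail (mconv F F) x) : False := by
  set δ := (r - 2 * p) / 4 with hδ
  have hδ0 : 0 < δ := by rw [hδ]; linarith
  have hr0 : 0 < r := by linarith
  set ρ := r⁻¹ * (2 * (p + δ)) with hρ
  have hρ1 : ρ < 1 := by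
    rw [hρ, inv_mul_lt_iff₀ hr0, hδ]; linarith
  have hρ0 : 0 ≤ ρ := by rw [hρ]; positivity
  set C := B * exp (γ * B + 1) with hC
  have hC0 : 0 ≤ C := by rw [hC]; positivity
  obtain ⟨ε, M, A, hε, hM, hA, hW, hgB, hfin, hn⟩ :=
    key F hF hp0 hp htop hδ0 hB (C / (1 - ρ) + 1)
  set I := ∫⁻ x, ENNReal.ofReal (gg γ ε M A x) ∂F with hI
  have hgm : Measurable fun x => ENNReal.ofReal (gg γ ε M A x) :=
    (gg_cont _ _ _ _).measurable.ennreal_ofReal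
  have hwm : Measurable fun x => ENNReal.ofReal (ww γ ε M x) :=
    (ww_cont _ _ _).measurable.ennreal_ofReal
  have h1 := cmp_lemma F (mconv F F) _ (gg γ ε M A) (gg_cont _ _ _ _) (gg_mono hA hγ hε)
    (gg_nonneg hA) B h
  rw [measure_univ, mul_one, lint_mconv F _ hgm] at h1
  set W := ∫⁻ x, ENNReal.ofReal (ww γ ε M x) ∂F with hWdef
  have h2 : ∫⁻ x, ∫⁻ y, ENNReal.ofReal (gg γ ε M A (x + y)) ∂F ∂F ≤ I * W + W * I := by
    calc _ ≤ ∫⁻ x, ∫⁻ y, (ENNReal.ofReal (gg γ ε M A x) * ENNReal.ofReal (ww γ ε M y) +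
            ENNReal.ofReal (ww γ ε M x) * ENNReal.ofReal (gg γ ε M A y)) ∂F ∂F := by
          apply lintegral_mono_ae
          filter_upwards [hF] with x hx
          apply lintegral_mono_ae
          filter_upwards [hF] with y hy
          rw [← ENNReal.ofReal_mul (gg_nonneg hA _), ← ENNReal.ofReal_mul (ww_pos _ _ _ _).le,
            ← ENNReal.ofReal_add (mul_nonneg (gg_nonneg hA _) (ww_pos _ _ _ _).le)
              (mul_nonneg (ww_pos _ _ _ _).le (gg_nonneg hA _))]
          exact ENNReal.ofReal_le_ofReal (gg_sub hA hε hM hx hy)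
      _ = ∫⁻ x, (ENNReal.ofReal (gg γ ε M A x) * W + ENNReal.ofReal (ww γ ε M x) * I) ∂F := by
          apply lintegral_congr
          intro x
          rw [lintegral_add_left (hwm.const_mul _), lintegral_const_mul _ hwm,
            lintegral_const_mul _ hgm]
      _ = _ := by
          rw [lintegral_add_left (hgm.mul_const _), lintegral_mul_const _ hgm,
            lintegral_mul_const _ hwm]
  have h3 : I ≤ ENNReal.ofReal C + ENNReal.ofReal r⁻¹ *
      (I * ENNReal.ofReal (p + δ) + ENNReal.ofReal (p + δ) * I) := by
    refine h1.trans ?_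
    gcongr
    exact h2.trans (by gcongr)
  obtain ⟨i, hi0, hi⟩ : ∃ i : ℝ, 0 ≤ i ∧ I = ENNReal.ofReal i :=
    ⟨I.toReal, ENNReal.toReal_nonneg, (ENNReal.ofReal_toReal hfin).symm⟩
  rw [hi] at h3 hn
  have hpd : 0 ≤ p + δ := by linarith
  rw [← ENNReal.ofReal_mul hi0, ← ENNReal.ofReal_mul hpd,
    ← ENNReal.ofReal_add (by positivity) (by positivity), ← ENNReal.ofReal_mul (by positivity),
    ← ENNReal.ofReal_add (by positivity) (by positivity),
    ENNReal.ofReal_le_ofReal_iff (by positivity)] at h3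
  rw [ENNReal.ofReal_le_ofReal_iff hi0] at hn
  have h4 : i ≤ C + ρ * i := by
    calc _ ≤ _ := h3
      _ = _ := by rw [hρ]; ring
  have h5 : i ≤ C / (1 - ρ) := by
    rw [le_div_iff₀ (by linarith)]; linarith
  linarith

/-- Lower bound. -/
lemma lower (F : Measure ℝ) [IsProbabilityMeasure F] (hF : ∀ᵐ x ∂F, 0 ≤ x) {γ p : ℝ}
    (hγ : 0 ≤ γ)
    (hp0 : 0 ≤ p) (hp : phi F γ = ENNReal.ofReal p) (htop : ∀ ε : ℝ, 0 < ε → phi F (γ + ε) = ⊤)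
    {r q B : ℝ} (hr0 : 0 ≤ r) (hr : r < 2 * q) (hB : 0 ≤ B)
    (hq : ENNReal.ofReal q ≤ ∫⁻ x in Iic B, ENNReal.ofReal (exp (γ * x)) ∂F)
    (h : ∀ x, B ≤ x → tail (mconv F F) x ≤ ENNReal.ofReal r * tail F x) : False := by
  set C := B * exp (γ * B + 1) with hC
  have hC0 : 0 ≤ C := by rw [hC]; positivity
  obtain ⟨ε, M, A, hε, hM, hA, hW, hgB, hfin, hn⟩ :=
    key F hF hp0 hp htop one_pos hB ((2 * q + 1) * C / (2 * q - r) + 1)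
  set I := ∫⁻ x, ENNReal.ofReal (gg γ ε M A x) ∂F with hI
  have hgm : Measurable fun x => ENNReal.ofReal (gg γ ε M A x) :=
    (gg_cont _ _ _ _).measurable.ennreal_ofReal
  have hem : Measurable fun x : ℝ => ENNReal.ofReal (exp (γ * x)) := by fun_prop
  have h1 := cmp_lemma (mconv F F) F _ (gg γ ε M A) (gg_cont _ _ _ _) (gg_mono hA hγ hε)
    (gg_nonneg hA) B h
  rw [mconv_univ, mul_one, lint_mconv F _ hgm] at h1
  set E := ∫⁻ x in Iic B, ENNReal.ofReal (exp (γ * x)) ∂F with hE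
  set J := ∫⁻ x in Ioi B, ENNReal.ofReal (gg γ ε M A x) ∂F with hJ
  have hgmono := gg_mono (M := M) hA hγ hε
  have hIJ : I ≤ ENNReal.ofReal C + J := by
    rw [hI, ← lintegral_add_compl (μ := F) (fun x => ENNReal.ofReal (gg γ ε M A x))
      (measurableSet_Iic (a := B)), compl_Iic]
    gcongr
    calc _ ≤ ∫⁻ x in Iic B, ENNReal.ofReal C ∂F := by
          apply setLIntegral_mono measurable_const
          intro x hx
          exact ENNReal.ofReal_le_ofReal ((hgmono hx).trans hgB)
      _ ≤ _ := by
          rw [setLIntegral_const]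
          calc _ ≤ ENNReal.ofReal C * 1 := by gcongr; exact prob_le_one
            _ = _ := mul_one _
  have h2 : E * J + J * E ≤ ∫⁻ x, ∫⁻ y, ENNReal.ofReal (gg γ ε M A (x + y)) ∂F ∂F := by
    rw [← lintegral_add_compl (μ := F)
      (fun x => ∫⁻ y, ENNReal.ofReal (gg γ ε M A (x + y)) ∂F)
      (measurableSet_Iic (a := B)), compl_Iic]
    apply add_le_add
    · rw [hE, ← lintegral_mul_const _ hem]
      apply lintegral_mono_ae
      filter_upwards [ae_restrict_of_ae hF] with x hx
      rw [hJ, ← lintegral_const_mul _ hgm]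
      refine le_trans ?_ (setLIntegral_le_lintegral (Ioi B) _)
      apply lintegral_mono_ae
      filter_upwards [ae_restrict_of_ae hF] with y hy
      rw [← ENNReal.ofReal_mul (exp_pos _).le]
      apply ENNReal.ofReal_le_ofReal
      rw [mul_comm, add_comm x y]
      exact gg_sup hA hε hy hx
    · rw [hJ, ← lintegral_mul_const _ hgm]
      apply lintegral_mono_ae
      filter_upwards [ae_restrict_of_ae hF] with x hx
      rw [hE, ← lintegral_const_mul _ hem]
      refine le_trans ?_ (setLIntegral_le_lintegral (Iic B) _)
      apply lintegral_mono_ae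
      filter_upwards [ae_restrict_of_ae hF] with y hy
      rw [← ENNReal.ofReal_mul (gg_nonneg hA _)]
      apply ENNReal.ofReal_le_ofReal
      exact gg_sup hA hε hx hy
  have hq0 : 0 ≤ q := by linarith
  have h3 : ENNReal.ofReal q * J + J * ENNReal.ofReal q ≤
      ENNReal.ofReal C + ENNReal.ofReal r * I := by
    calc _ ≤ E * J + J * E := by gcongr
      _ ≤ _ := h2.trans h1
      _ ≤ _ := by gcongr
  have hJfin : J ≠ ⊤ := ne_top_of_le_ne_top hfin (setLIntegral_le_lintegral _ _)
  obtain ⟨i, hi0, hi⟩ : ∃ i : ℝ, 0 ≤ i ∧ I = ENNReal.ofReal i :=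
    ⟨I.toReal, ENNReal.toReal_nonneg, (ENNReal.ofReal_toReal hfin).symm⟩
  obtain ⟨j, hj0, hj⟩ : ∃ j : ℝ, 0 ≤ j ∧ J = ENNReal.ofReal j :=
    ⟨J.toReal, ENNReal.toReal_nonneg, (ENNReal.ofReal_toReal hJfin).symm⟩
  rw [hi] at h3 hn hIJ
  rw [hj] at h3 hIJ
  rw [← ENNReal.ofReal_add hC0 hj0, ENNReal.ofReal_le_ofReal_iff (by positivity)] at hIJ
  rw [← ENNReal.ofReal_mul hq0, ← ENNReal.ofReal_mul hj0, ← ENNReal.ofReal_mul hr0,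
    ← ENNReal.ofReal_add (by positivity) (by positivity),
    ← ENNReal.ofReal_add (by positivity) (by positivity),
    ENNReal.ofReal_le_ofReal_iff (by positivity)] at h3
  rw [ENNReal.ofReal_le_ofReal_iff hi0] at hn
  have h5 : i ≤ (2 * q + 1) * C / (2 * q - r) := by
    rw [le_div_iff₀ (by linarith)]
    nlinarith [mul_le_mul_of_nonneg_left hIJ hq0]
  linarith

/-- If `phiHat` is finite then `gammaHat` is finite and `phiHat` is attained there. -/
lemma hat_facts (F : Measure ℝ) [IsProbabilityMeasure F] (hF : ∀ᵐ x ∂F, 0 ≤ x)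
    (hub : ∀ x : ℝ, tail F x ≠ 0) (hfin : phiHat F ≠ ⊤) :
    ∃ γ : ℝ, 0 ≤ γ ∧ phi F γ = phiHat F ∧ ∀ ε : ℝ, 0 < ε → phi F (γ + ε) = ⊤ := by
  have hG : gammaHat F ≠ ⊤ := by
    intro hG
    have hb : ∀ n : ℕ, ENNReal.ofReal (exp n) * tail F 1 ≤ phiHat F := by
      intro n
      have h1 := phi_ge F (Nat.cast_nonneg n) 1
      rw [mul_one] at h1
      refine h1.trans ?_
      exact le_iSup₂_of_le (f := fun (γ : ℝ) (_ : ENNReal.ofReal γ < gammaHat F ∨ γ < 0) => phi F γ)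
        (n : ℝ) (Or.inl (by rw [hG]; exact ENNReal.ofReal_lt_top)) le_rfl
    have ht : Tendsto (fun n : ℕ => ENNReal.ofReal (exp n) * tail F 1) atTop
        (𝓝 (⊤ * tail F 1)) := by
      apply ENNReal.Tendsto.mul_const _ (Or.inl (by simp))
      exact ENNReal.tendsto_ofReal_atTop.comp
        (Real.tendsto_exp_atTop.comp tendsto_natCast_atTop_atTop)
    have := le_of_tendsto' ht hb
    rw [ENNReal.top_mul (hub 1)] at this
    exact hfin (top_le_iff.1 this)
  set γ := (gammaHat F).toReal with hγ
  have hγ' : ENNReal.ofReal γ = gammaHat F := ENNReal.ofReal_toReal hG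
  have hγ0 : 0 ≤ γ := ENNReal.toReal_nonneg
  refine ⟨γ, hγ0, le_antisymm ?_ ?_, ?_⟩
  · set u : ℕ → ℝ := fun n => γ - 1 / ((n : ℝ) + 1) with hu
    have hut : Tendsto u atTop (𝓝 γ) := by
      have := tendsto_one_div_add_atTop_nhds_zero_nat (𝕜 := ℝ)
      have h2 := (tendsto_const_nhds (x := γ)).sub this
      rwa [sub_zero] at h2
    have hun : ∀ n, phi F (u n) ≤ phiHat F := by
      intro n
      have hlt : u n < γ := by
        have : (0 : ℝ) < 1 / ((n : ℝ) + 1) := by positivity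
        simp only [hu]; linarith
      refine le_iSup₂_of_le (f := fun (γ : ℝ) (_ : ENNReal.ofReal γ < gammaHat F ∨ γ < 0) =>
        phi F γ) (u n) ?_ le_rfl
      rcases lt_or_ge (u n) 0 with hn | hn
      · exact Or.inr hn
      · left
        rw [← hγ']
        exact (ENNReal.ofReal_lt_ofReal_iff_of_nonneg hn).2 hlt
    have h1 := lintegral_liminf_le (u := atTop) (μ := F)
      (f := fun (n : ℕ) x => ENNReal.ofReal (exp (u n * x))) (fun n => by fun_prop)
    have h2 : phi F γ =
        ∫⁻ x, liminf (fun n : ℕ => ENNReal.ofReal (exp (u n * x))) atTop ∂F := by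
      apply lintegral_congr
      intro x
      have : Tendsto (fun n : ℕ => ENNReal.ofReal (exp (u n * x))) atTop
          (𝓝 (ENNReal.ofReal (exp (γ * x)))) :=
        ENNReal.tendsto_ofReal ((Real.continuous_exp.tendsto _).comp (hut.mul_const x))
      exact this.liminf_eq.symm
    rw [h2]
    refine h1.trans ?_
    refine le_trans (liminf_le_liminf (v := fun _ => phiHat F) (Eventually.of_forall hun)) ?_
    simp
  · refine iSup₂_le ?_
    intro a ha
    apply phi_mono F hF
    rcases ha with ha | ha
    · rw [← hγ'] at ha
      by_contra hc
      push Not at hc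
      exact absurd (ENNReal.ofReal_le_ofReal hc.le) (not_le.2 ha)
    · linarith
  · intro ε hε
    by_contra hne
    have : ENNReal.ofReal (γ + ε) ≤ gammaHat F :=
      le_sSup ⟨γ + ε, rfl, lt_top_iff_ne_top.2 hne⟩
    rw [← hγ', ENNReal.ofReal_le_ofReal_iff hγ0] at this
    linarith

/-- Theorem 3: if (F*F)‾(x)/F̄(x) → c ∈ (0,∞], then c = 2φ(γ̂). -/
theorem stmt4 (F : MeasureTheory.Measure ℝ) [MeasureTheory.IsProbabilityMeasure F]
    (hsupp : F (Set.Iio 0) = 0) (hub : ∀ x : ℝ, tail F x ≠ 0)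
    (c : ℝ≥0∞) (hc : 0 < c)
    (h : Tendsto (fun x : ℝ => tail (mconv F F) x / tail F x) atTop (𝓝 c)) :
    c = 2 * phiHat F := by
  have hF := ae_nonneg_of F hsupp
  have hT : ∀ x, tail F x ≠ ⊤ := fun x => measure_ne_top _ _
  have hup : ∀ K : ℝ≥0∞, c < K → ∃ B : ℝ, ∀ x, B ≤ x → tail (mconv F F) x ≤ K * tail F x := by
    intro K hK
    obtain ⟨B, hB⟩ := eventually_atTop.1 (h.eventually (gt_mem_nhds hK))
    exact ⟨B, fun x hx => (ENNReal.div_le_iff (hub x) (hT x)).1 (hB x hx).le⟩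
  by_cases hfin : phiHat F = ⊤
  · rw [hfin, ENNReal.mul_top (by norm_num)]
    by_contra hcT
    obtain ⟨B, hB⟩ := hup (c + 1) (ENNReal.lt_add_right hcT one_ne_zero)
    exact caseI F hF hub (c + 1) (ENNReal.add_ne_top.2 ⟨hcT, ENNReal.one_ne_top⟩) B hB hfin
  obtain ⟨γ, hγ, hφ, htop⟩ := hat_facts F hF hub hfin
  obtain ⟨p, hp0, hp⟩ : ∃ p : ℝ, 0 ≤ p ∧ phiHat F = ENNReal.ofReal p :=
    ⟨_, ENNReal.toReal_nonneg, (ENNReal.ofReal_toReal hfin).symm⟩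
  rw [hp] at hφ
  have h2p : 2 * phiHat F = ENNReal.ofReal (2 * p) := by
    rw [hp, ENNReal.ofReal_mul (by norm_num)]; simp
  rw [h2p]
  rcases lt_trichotomy c (ENNReal.ofReal (2 * p)) with hlt | heq | hgt
  · exfalso
    have hcT : c ≠ ⊤ := ne_top_of_lt hlt
    obtain ⟨d, hd0, rfl⟩ : ∃ d : ℝ, 0 ≤ d ∧ c = ENNReal.ofReal d :=
      ⟨_, ENNReal.toReal_nonneg, (ENNReal.ofReal_toReal hcT).symm⟩
    rw [ENNReal.ofReal_lt_ofReal_iff_of_nonneg hd0] at hlt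
    obtain ⟨r, hdr, hrp⟩ := exists_between hlt
    obtain ⟨q, hrq, hqp⟩ := exists_between (show r / 2 < p by linarith)
    obtain ⟨B1, hB1⟩ := hup (ENNReal.ofReal r) ((ENNReal.ofReal_lt_ofReal_iff_of_nonneg hd0).2 hdr)
    have hmono : Monotone fun n : ℕ => Iic (n : ℝ) := fun m n hmn =>
      Iic_subset_Iic.2 (Nat.cast_le.2 hmn)
    have htend : Tendsto (fun n : ℕ => ∫⁻ x in Iic (n : ℝ), ENNReal.ofReal (exp (γ * x)) ∂F) atTop
        (𝓝 (phi F γ)) := by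
      have hU : (⋃ n : ℕ, Iic (n : ℝ)) = univ := by
        ext x; simpa using exists_nat_ge x
      have := tendsto_measure_iUnion_atTop
        (μ := F.withDensity fun x => ENNReal.ofReal (exp (γ * x))) hmono
      rw [hU, withDensity_apply _ MeasurableSet.univ, Measure.restrict_univ] at this
      refine this.congr fun n => ?_
      simp [withDensity_apply _ (measurableSet_Iic (a := (n : ℝ)))]
    have hev := htend.eventually (lt_mem_nhds (a := ENNReal.ofReal q) (by
      rw [hφ]; exact (ENNReal.ofReal_lt_ofReal_iff_of_nonneg (by linarith)).2 hqp))
    obtain ⟨n, hn1, hn2⟩ := (hev.and (tendsto_natCast_atTop_atTop.eventually_ge_atTop B1)).exists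
    exact lower F hF hγ hp0 hφ htop (r := r) (q := q) (B := n) (by linarith) (by linarith)
      (Nat.cast_nonneg n) hn1.le (fun x hx => hB1 x (hn2.trans hx))
  · exact heq
  · exfalso
    obtain ⟨r', hr1, hr2⟩ := exists_between hgt
    obtain ⟨r, hr0, rfl⟩ : ∃ d : ℝ, 0 ≤ d ∧ r' = ENNReal.ofReal d :=
      ⟨_, ENNReal.toReal_nonneg, (ENNReal.ofReal_toReal (ne_top_of_lt hr2)).symm⟩
    rw [ENNReal.ofReal_lt_ofReal_iff_of_nonneg (by linarith)] at hr1
    obtain ⟨B, hB⟩ := eventually_atTop.1 (h.eventually (lt_mem_nhds hr2))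
    have hrpos : 0 < r := by linarith
    refine upper F hF hγ hp0 hφ htop (r := r) (B := max B 0) hr1 (le_max_right _ _) ?_
    intro x hx
    have h1 := (hB x ((le_max_left _ _).trans hx)).le
    rw [ENNReal.le_div_iff_mul_le (Or.inl (hub x)) (Or.inl (hT x))] at h1
    calc tail F x = ENNReal.ofReal r⁻¹ * (ENNReal.ofReal r * tail F x) := by
          rw [← mul_assoc, ← ENNReal.ofReal_mul (by positivity), inv_mul_cancel₀ hrpos.ne']
          simp
      _ ≤ _ := by gcongr
end
end

section
/- For any heavy-tailed distribution F on [0,∞) with mean a ∈ (0,∞], liminf_{x→∞} (1/F̄(x)) ∫_0^x F̄(x−y) F̄(y) dy = 2a. -/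
open MeasureTheory Filter Real Set
open scoped ENNReal Topology

noncomputable section

lemma tail_anti (F : MeasureTheory.Measure ℝ) : Antitone (tail F) := by
  intro x y h
  exact measure_mono (Ioi_subset_Ioi h)

lemma tail_meas (F : MeasureTheory.Measure ℝ) : Measurable (tail F) :=
  (tail_anti F).measurable

/-- the tail restricted to the half line -/
def ktail (F : MeasureTheory.Measure ℝ) : ℝ → ℝ≥0∞ := (Ici (0:ℝ)).indicator (tail F)

lemma ktail_meas (F : MeasureTheory.Measure ℝ) : Measurable (ktail F) :=
  (tail_meas F).indicator measurableSet_Ici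

lemma lintegral_ktail (F : MeasureTheory.Measure ℝ) :
    ∫⁻ y, ktail F y = ∫⁻ y in Ioi (0:ℝ), tail F y := by
  unfold ktail
  rw [lintegral_indicator measurableSet_Ici]
  exact setLIntegral_congr Ioi_ae_eq_Ici.symm

/-- truncated exponential weight -/
def uw (γ : ℝ) (n : ℕ) (x : ℝ) : ℝ≥0∞ := ENNReal.ofReal (Real.exp (γ * min x n) - 1)

lemma uw_meas (γ : ℝ) (n : ℕ) : Measurable (uw γ n) := by
  unfold uw; fun_prop

lemma exp_heavy (F : MeasureTheory.Measure ℝ) [MeasureTheory.IsProbabilityMeasure F]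
    (hsupp : F (Set.Iio 0) = 0) (hheavy : IsHeavyTailed F) (γ : ℝ) (hγ : 0 < γ) :
    ∫⁻ y in Ioi (0:ℝ), tail F y * ENNReal.ofReal (Real.exp (γ * y)) = ⊤ := by
  have h0 : 0 ≤ᵐ[F] (fun x : ℝ => x) := by
    rw [Filter.EventuallyLE, ae_iff]
    convert hsupp using 2
    ext x; simp
  have key := lintegral_comp_eq_lintegral_meas_lt_mul F (f := fun x : ℝ => x)
    (g := fun t => γ * Real.exp (γ * t)) h0 aemeasurable_id
    (fun t _ => (by fun_prop : Continuous (fun t => γ * Real.exp (γ * t))).intervalIntegrable _ _)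
    (Eventually.of_forall fun t => by positivity)
  have hprim : ∀ x : ℝ, ∫ t in (0:ℝ)..x, γ * Real.exp (γ * t) = Real.exp (γ * x) - 1 := by
    intro x
    have := intervalIntegral.integral_eq_sub_of_hasDerivAt (a := 0) (b := x)
      (f := fun t => Real.exp (γ * t)) (f' := fun t => γ * Real.exp (γ * t))
      (fun t _ => by
        have := ((hasDerivAt_id t).const_mul γ).exp
        simpa [mul_comm] using this)
      ((by fun_prop : Continuous (fun t => γ * Real.exp (γ * t))).intervalIntegrable _ _)
    simpa using this
  simp only [hprim] at key
  have hL : ∫⁻ x, ENNReal.ofReal (Real.exp (γ * x) - 1) ∂F = ⊤ := by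
    by_contra hne
    have h1 := hheavy γ hγ
    unfold phi at h1
    have h2 : ∫⁻ x, ENNReal.ofReal (Real.exp (γ * x)) ∂F
        ≤ ∫⁻ x, (ENNReal.ofReal (Real.exp (γ * x) - 1) + 1) ∂F := by
      apply lintegral_mono
      intro x
      calc ENNReal.ofReal (Real.exp (γ * x))
          = ENNReal.ofReal ((Real.exp (γ * x) - 1) + 1) := by ring_nf
        _ ≤ ENNReal.ofReal (Real.exp (γ * x) - 1) + ENNReal.ofReal 1 := ENNReal.ofReal_add_le
        _ = _ := by simp
    rw [lintegral_add_right _ measurable_const, h1] at h2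
    simp at h2
    exact hne h2
  rw [hL] at key
  have h3 : ∫⁻ t in Ioi (0:ℝ), F {a : ℝ | t < a} * ENNReal.ofReal (γ * Real.exp (γ * t))
      = ENNReal.ofReal γ * ∫⁻ y in Ioi (0:ℝ), tail F y * ENNReal.ofReal (Real.exp (γ * y)) := by
    have hk := tail_meas F
    rw [← lintegral_const_mul _ (by fun_prop)]
    refine lintegral_congr fun t => ?_
    rw [ENNReal.ofReal_mul hγ.le]
    have : F {a : ℝ | t < a} = tail F t := rfl
    rw [this]; ring
  rw [h3] at key
  by_contra hne
  exact ENNReal.mul_ne_top ENNReal.ofReal_ne_top hne key.symm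

lemma uw_unbounded (F : MeasureTheory.Measure ℝ) [MeasureTheory.IsProbabilityMeasure F]
    (hsupp : F (Set.Iio 0) = 0) (hheavy : IsHeavyTailed F)
    (hfin : ∫⁻ y, ktail F y ≠ ⊤) (γ : ℝ) (hγ : 0 < γ) :
    ⨆ n, ∫⁻ x, uw γ n x * ktail F x = ⊤ := by
  have hk := ktail_meas F
  have hu := uw_meas γ
  rw [← lintegral_iSup (fun n => by fun_prop)]
  · by_contra hne
    have h1 := exp_heavy F hsupp hheavy γ hγ
    have h2 : ∫⁻ y in Ioi (0:ℝ), tail F y * ENNReal.ofReal (Real.exp (γ * y))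
        ≤ ∫⁻ y, ((⨆ n, uw γ n y * ktail F y) + ktail F y) := by
      rw [← lintegral_indicator measurableSet_Ioi]
      apply lintegral_mono
      intro y
      by_cases hy : y ∈ Ioi (0:ℝ)
      · simp only [indicator_of_mem hy]
        have hy' : (0:ℝ) < y := hy
        have hk : ktail F y = tail F y := by simp [ktail, hy'.le]
        obtain ⟨n, hn⟩ := exists_nat_ge y
        calc tail F y * ENNReal.ofReal (Real.exp (γ * y))
            = tail F y * ENNReal.ofReal ((Real.exp (γ * y) - 1) + 1) := by ring_nf
          _ ≤ tail F y * (ENNReal.ofReal (Real.exp (γ * y) - 1) + ENNReal.ofReal 1) := by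
              gcongr; exact ENNReal.ofReal_add_le
          _ = uw γ n y * ktail F y + ktail F y := by
              rw [hk]; unfold uw; rw [min_eq_left hn]; simp; ring
          _ ≤ _ := by
              gcongr
              exact le_iSup (fun n => uw γ n y * ktail F y) n
      · simp [indicator_of_notMem hy]
    rw [h1, lintegral_add_right _ (ktail_meas F)] at h2
    exact (ENNReal.add_ne_top.2 ⟨hne, hfin⟩) (top_le_iff.1 h2)
  · intro n m hnm x
    simp only [uw]
    gcongr

lemma uw_submul (γ : ℝ) (hγ : 0 < γ) (n : ℕ) (x y : ℝ) (hx : 0 ≤ x) (hy : 0 ≤ y) :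
    uw γ n (x + y) ≤ uw γ n x + uw γ n y + uw γ n x * uw γ n y := by
  unfold uw
  have hn : (0:ℝ) ≤ n := Nat.cast_nonneg n
  have hx' : 0 ≤ min x (n:ℝ) := le_min hx hn
  have hy' : 0 ≤ min y (n:ℝ) := le_min hy hn
  have e1 : 0 ≤ Real.exp (γ * min x n) - 1 := by
    have := Real.one_le_exp (mul_nonneg hγ.le hx'); linarith
  have e2 : 0 ≤ Real.exp (γ * min y n) - 1 := by
    have := Real.one_le_exp (mul_nonneg hγ.le hy'); linarith
  rw [← ENNReal.ofReal_mul e1, ← ENNReal.ofReal_add e1 e2,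
    ← ENNReal.ofReal_add (by positivity) (by positivity)]
  apply ENNReal.ofReal_le_ofReal
  have hmin : min (x + y) (n:ℝ) ≤ min x n + min y n := by
    rcases le_total x n with h1 | h1 <;> rcases le_total y n with h2 | h2 <;>
      simp only [min_eq_left h1, min_eq_right h1, min_eq_left h2, min_eq_right h2]
    · exact min_le_left _ _
    · exact (min_le_right _ _).trans (by linarith)
    · exact (min_le_right _ _).trans (by linarith)
    · exact (min_le_right _ _).trans (by linarith)
  have : Real.exp (γ * min (x + y) n) ≤ Real.exp (γ * min x n) * Real.exp (γ * min y n) := by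
    rw [← Real.exp_add, ← mul_add]
    exact Real.exp_le_exp.2 (mul_le_mul_of_nonneg_left hmin hγ.le)
  nlinarith

lemma uw_conv (F : MeasureTheory.Measure ℝ) (γ : ℝ) (hγ : 0 < γ) (n : ℕ) :
    ∫⁻ x, uw γ n x * ∫⁻ y, ktail F (x - y) * ktail F y
      ≤ 2 * (∫⁻ y, ktail F y) * (∫⁻ x, uw γ n x * ktail F x)
        + (∫⁻ x, uw γ n x * ktail F x) * (∫⁻ x, uw γ n x * ktail F x) := by
  have hk := ktail_meas F
  have hu := uw_meas γ n
  calc ∫⁻ x, uw γ n x * ∫⁻ y, ktail F (x - y) * ktail F y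
      = ∫⁻ x, ∫⁻ y, uw γ n x * (ktail F (x - y) * ktail F y) := by
        refine lintegral_congr fun x => ?_
        rw [lintegral_const_mul _ (by fun_prop)]
    _ = ∫⁻ y, ∫⁻ x, uw γ n x * (ktail F (x - y) * ktail F y) := by
        rw [lintegral_lintegral_swap]
        apply Measurable.aemeasurable
        simp only [Function.uncurry_def]
        fun_prop
    _ = ∫⁻ y, ∫⁻ z, uw γ n (z + y) * (ktail F z * ktail F y) := by
        refine lintegral_congr fun y => ?_
        rw [← lintegral_add_right_eq_self _ y]
        simp
    _ ≤ ∫⁻ y, ∫⁻ z, ((uw γ n z * ktail F z) * ktail F y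
          + ktail F z * (uw γ n y * ktail F y)
          + (uw γ n z * ktail F z) * (uw γ n y * ktail F y)) := by
        refine lintegral_mono fun y => lintegral_mono fun z => ?_
        by_cases hz : 0 ≤ z
        · by_cases hy : 0 ≤ y
          · calc uw γ n (z + y) * (ktail F z * ktail F y)
                ≤ (uw γ n z + uw γ n y + uw γ n z * uw γ n y) * (ktail F z * ktail F y) := by
                  gcongr; exact uw_submul γ hγ n z y hz hy
              _ = _ := by ring
          · have : ktail F y = 0 := by simp [ktail, hy]
            simp [this]
        · have : ktail F z = 0 := by simp [ktail, hz]
          simp [this]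
    _ = ∫⁻ y, ((∫⁻ x, uw γ n x * ktail F x) * ktail F y
          + (∫⁻ x, ktail F x) * (uw γ n y * ktail F y)
          + (∫⁻ x, uw γ n x * ktail F x) * (uw γ n y * ktail F y)) := by
        refine lintegral_congr fun y => ?_
        rw [lintegral_add_left (by fun_prop), lintegral_add_left (by fun_prop),
          lintegral_mul_const _ (by fun_prop), lintegral_mul_const _ (by fun_prop),
          lintegral_mul_const _ (by fun_prop)]
    _ = _ := by
        rw [lintegral_add_left (by fun_prop), lintegral_add_left (by fun_prop),
          lintegral_const_mul _ (by fun_prop), lintegral_const_mul _ (by fun_prop),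
          lintegral_const_mul _ (by fun_prop)]
        ring

lemma uw_step (F : MeasureTheory.Measure ℝ) (γ : ℝ) (hγ : 0 < γ) (n : ℕ) :
    ∫⁻ x, uw γ (n+1) x * ktail F x
      ≤ ENNReal.ofReal (Real.exp γ) * (∫⁻ x, uw γ n x * ktail F x)
        + ENNReal.ofReal (Real.exp γ - 1) * ∫⁻ y, ktail F y := by
  have hk := ktail_meas F
  have hu := uw_meas γ n
  rw [← lintegral_const_mul _ (by fun_prop), ← lintegral_const_mul _ (by fun_prop),
    ← lintegral_add_left (by fun_prop)]
  refine lintegral_mono fun x => ?_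
  dsimp only
  rw [← mul_assoc, ← add_mul]
  gcongr
  unfold uw
  rw [← ENNReal.ofReal_mul (Real.exp_pos _).le]
  refine le_trans (ENNReal.ofReal_le_ofReal ?_) ENNReal.ofReal_add_le
  have hmin : min x ((n+1 : ℕ):ℝ) ≤ 1 + min x n := by
    push_cast
    rcases le_total x n with h1 | h1
    · rw [min_eq_left h1]; exact (min_le_left _ _).trans (by linarith)
    · rw [min_eq_right h1]; exact (min_le_right _ _).trans (by linarith)
  have : Real.exp (γ * min x ((n+1 : ℕ):ℝ)) ≤ Real.exp γ * Real.exp (γ * min x n) := by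
    rw [← Real.exp_add]
    apply Real.exp_le_exp.2
    nlinarith [mul_le_mul_of_nonneg_left hmin hγ.le]
  linarith

lemma uw_zero (F : MeasureTheory.Measure ℝ) (γ : ℝ) (hγ : 0 < γ) :
    ∫⁻ x, uw γ 0 x * ktail F x = 0 := by
  have : ∀ x, uw γ 0 x = 0 := by
    intro x
    unfold uw
    apply ENNReal.ofReal_of_nonpos
    have : γ * min x ((0:ℕ):ℝ) ≤ 0 :=
      mul_nonpos_of_nonneg_of_nonpos hγ.le (by simp)
    have := Real.exp_le_one_iff.2 this
    linarith
  simp [this]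

/-- choice of truncation level -/
lemma uw_choose (F : MeasureTheory.Measure ℝ) [MeasureTheory.IsProbabilityMeasure F]
    (hsupp : F (Set.Iio 0) = 0) (hheavy : IsHeavyTailed F)
    (hfin : ∫⁻ y, ktail F y ≠ ⊤) (γ : ℝ) (hγ : 0 < γ) (ε : ℝ) (hε : 0 < ε)
    (hs : Real.exp γ * ε + (Real.exp γ - 1) * (∫⁻ y, ktail F y).toReal ≤ 2 * ε) :
    ∃ n, ENNReal.ofReal ε ≤ ∫⁻ x, uw γ n x * ktail F x ∧
      ∫⁻ x, uw γ n x * ktail F x ≤ ENNReal.ofReal (2 * ε) := by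
  classical
  have hex : ∃ n, ENNReal.ofReal ε ≤ ∫⁻ x, uw γ n x * ktail F x := by
    by_contra hcon
    push Not at hcon
    have h1 := uw_unbounded F hsupp hheavy hfin γ hγ
    have h2 : ⨆ n, ∫⁻ x, uw γ n x * ktail F x ≤ ENNReal.ofReal ε :=
      iSup_le fun n => (hcon n).le
    rw [h1] at h2
    exact ENNReal.ofReal_ne_top (top_le_iff.1 h2)
  refine ⟨Nat.find hex, Nat.find_spec hex, ?_⟩
  rcases hm : Nat.find hex with _ | m
  · rw [uw_zero F γ hγ]; exact zero_le
  · have hlt : ¬ (ENNReal.ofReal ε ≤ ∫⁻ x, uw γ m x * ktail F x) :=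
      Nat.find_min hex (by omega)
    push Not at hlt
    have he : 0 ≤ Real.exp γ - 1 := by
      have := Real.one_le_exp hγ.le; linarith
    calc ∫⁻ x, uw γ (m+1) x * ktail F x
        ≤ _ := uw_step F γ hγ m
      _ ≤ ENNReal.ofReal (Real.exp γ) * ENNReal.ofReal ε
          + ENNReal.ofReal (Real.exp γ - 1) * ENNReal.ofReal (∫⁻ y, ktail F y).toReal := by
          rw [ENNReal.ofReal_toReal hfin]
          gcongr
      _ = ENNReal.ofReal (Real.exp γ * ε + (Real.exp γ - 1) * (∫⁻ y, ktail F y).toReal) := by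
          rw [ENNReal.ofReal_add (by positivity) (by positivity),
            ENNReal.ofReal_mul (by positivity), ENNReal.ofReal_mul he]
      _ ≤ _ := ENNReal.ofReal_le_ofReal hs

lemma conv_le (F : MeasureTheory.Measure ℝ) (x : ℝ) :
    ∫⁻ y in Set.Ioc (0:ℝ) x, tail F (x - y) * tail F y
      ≤ ∫⁻ y, ktail F (x - y) * ktail F y := by
  rw [← lintegral_indicator measurableSet_Ioc]
  refine lintegral_mono fun y => ?_
  by_cases hy : y ∈ Ioc 0 x
  · have h1 : (0:ℝ) ≤ y := hy.1.le
    have h2 : y ≤ x := hy.2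
    simp [hy, ktail, h1, h2]
  · simp [indicator_of_notMem hy]

lemma conv_ge (F : MeasureTheory.Measure ℝ) (A x : ℝ) (hA : 0 ≤ A) (hx : 2 * A ≤ x) :
    2 * (∫⁻ y in Ioc (0:ℝ) A, tail F y) * tail F x
      ≤ ∫⁻ y in Set.Ioc (0:ℝ) x, tail F (x - y) * tail F y := by
  have hk := tail_meas F
  have hdisj : Disjoint (Ioc 0 A) (Ioc (x - A) x) := by
    rw [Set.disjoint_left]
    intro y h1 h2
    have := h1.2; have := h2.1
    linarith
  have hsub : Ioc 0 A ∪ Ioc (x - A) x ⊆ Ioc 0 x := by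
    intro y hy
    rcases hy with h | h
    · exact ⟨h.1, h.2.trans (by linarith)⟩
    · exact ⟨by have := h.1; linarith, h.2⟩
  have h1 : (∫⁻ y in Ioc (0:ℝ) A, tail F y) * tail F x
      ≤ ∫⁻ y in Ioc 0 A, tail F (x - y) * tail F y := by
    rw [← lintegral_mul_const _ hk]
    refine setLIntegral_mono (by fun_prop) fun y hy => ?_
    rw [mul_comm]
    gcongr
    exact tail_anti F (by have := hy.1; linarith)
  have h2 : (∫⁻ y in Ioc (0:ℝ) A, tail F y) * tail F x
      ≤ ∫⁻ y in Ioc (x - A) x, tail F (x - y) * tail F y := by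
    have e : ∫⁻ y in Ioc (0:ℝ) A, tail F y = ∫⁻ y in Ioc (x - A) x, tail F (x - y) := by
      rw [setLIntegral_congr (Ioo_ae_eq_Ioc.symm.trans Ioo_ae_eq_Ico),
        ← lintegral_indicator measurableSet_Ico, ← lintegral_sub_left_eq_self _ x,
        ← lintegral_indicator measurableSet_Ioc]
      refine lintegral_congr fun y => ?_
      simp only [indicator, mem_Ico, mem_Ioc]
      have : (0 ≤ x - y ∧ x - y < A) ↔ (x - A < y ∧ y ≤ x) := by
        constructor <;> rintro ⟨h, h'⟩ <;> constructor <;> linarith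
      simp only [this]
    rw [e, ← lintegral_mul_const _ (by fun_prop)]
    refine setLIntegral_mono (by fun_prop) fun y hy => ?_
    gcongr
    exact tail_anti F hy.2
  calc 2 * (∫⁻ y in Ioc (0:ℝ) A, tail F y) * tail F x
      = (∫⁻ y in Ioc (0:ℝ) A, tail F y) * tail F x
        + (∫⁻ y in Ioc (0:ℝ) A, tail F y) * tail F x := by ring
    _ ≤ _ := add_le_add h1 h2
    _ = ∫⁻ y in Ioc 0 A ∪ Ioc (x - A) x, tail F (x - y) * tail F y :=
        (lintegral_union measurableSet_Ioc hdisj).symm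
    _ ≤ _ := lintegral_mono_set hsub

lemma lower_bd (F : MeasureTheory.Measure ℝ) [MeasureTheory.IsProbabilityMeasure F]
    (hub : ∀ x : ℝ, tail F x ≠ 0) :
    2 * ∫⁻ y in Set.Ioi (0:ℝ), tail F y ≤ liminf (fun x : ℝ =>
        (∫⁻ y in Set.Ioc (0:ℝ) x, tail F (x - y) * tail F y) / tail F x) atTop := by
  have hU : Ioi (0:ℝ) = ⋃ n : ℕ, Ioc (0:ℝ) n := by
    ext y
    simp only [mem_Ioi, mem_iUnion, mem_Ioc]
    exact ⟨fun h => by obtain ⟨n, hn⟩ := exists_nat_ge y; exact ⟨n, h, hn⟩,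
      fun ⟨n, h, _⟩ => h⟩
  have hdir : Directed (· ⊆ ·) (fun n : ℕ => Ioc (0:ℝ) n) := by
    apply Monotone.directed_le
    intro n m h
    exact Ioc_subset_Ioc_right (by exact_mod_cast h)
  rw [hU, setLIntegral_iUnion_of_directed _ hdir, ENNReal.mul_iSup]
  refine iSup_le fun n => ?_
  refine le_liminf_of_le (by isBoundedDefault) ?_
  filter_upwards [eventually_ge_atTop (2 * (n:ℝ))] with x hx
  rw [ENNReal.le_div_iff_mul_le (Or.inl (hub x)) (Or.inl (measure_ne_top F _))]
  exact conv_ge F n x (Nat.cast_nonneg n) hx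

lemma main_ineq (F : MeasureTheory.Measure ℝ) (c : ℝ≥0∞) (x0 : ℝ) (hx0 : 0 ≤ x0)
    (h : ∀ x, x0 ≤ x → c * tail F x ≤
      ∫⁻ y in Set.Ioc (0:ℝ) x, tail F (x - y) * tail F y)
    (γ : ℝ) (hγ : 0 < γ) (n : ℕ) :
    c * (∫⁻ x, uw γ n x * ktail F x)
      ≤ 2 * (∫⁻ y, ktail F y) * (∫⁻ x, uw γ n x * ktail F x)
        + (∫⁻ x, uw γ n x * ktail F x) * (∫⁻ x, uw γ n x * ktail F x)
        + c * ENNReal.ofReal (Real.exp (γ * x0) - 1) * (∫⁻ y, ktail F y) := by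
  have hk := ktail_meas F
  have hu := uw_meas γ n
  refine le_trans ?_ (add_le_add_left (uw_conv F γ hγ n) _)
  rw [← lintegral_const_mul _ (by fun_prop), ← lintegral_const_mul _ (by fun_prop),
    ← lintegral_add_right _ (by fun_prop)]
  refine lintegral_mono fun x => ?_
  dsimp only
  rcases le_total x0 x with hx | hx
  · have hk' : ktail F x = tail F x := by simp [ktail, hx0.trans hx]
    refine le_trans ?_ le_self_add
    calc c * (uw γ n x * ktail F x) = uw γ n x * (c * tail F x) := by rw [hk']; ring
      _ ≤ _ := by gcongr; exact (h x hx).trans (conv_le F x)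
  · refine le_trans ?_ le_add_self
    rw [← mul_assoc]
    gcongr
    unfold uw
    gcongr
    exact (min_le_left _ _).trans hx

lemma upper_bd (F : MeasureTheory.Measure ℝ) [MeasureTheory.IsProbabilityMeasure F]
    (hsupp : F (Set.Iio 0) = 0) (hheavy : IsHeavyTailed F) :
    liminf (fun x : ℝ =>
        (∫⁻ y in Set.Ioc (0:ℝ) x, tail F (x - y) * tail F y) / tail F x) atTop
      ≤ 2 * ∫⁻ y in Set.Ioi (0:ℝ), tail F y := by
  rw [← lintegral_ktail]
  by_contra hcon
  push Not at hcon
  obtain ⟨c, hc1, hc2⟩ := exists_between hcon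
  have hct : c ≠ ⊤ := hc2.ne_top
  have hfin : ∫⁻ y, ktail F y ≠ ⊤ := by
    intro h
    rw [h] at hc1
    simp at hc1
  obtain ⟨x1, hx1⟩ := eventually_atTop.1 (eventually_lt_of_lt_liminf hc2)
  set x0 := max x1 0 with hx0d
  have hx0 : 0 ≤ x0 := le_max_right _ _
  have h : ∀ x, x0 ≤ x → c * tail F x ≤
      ∫⁻ y in Set.Ioc (0:ℝ) x, tail F (x - y) * tail F y := fun x hx =>
    ENNReal.mul_le_of_le_div (hx1 x ((le_max_left _ _).trans hx)).le
  set a := ∫⁻ y, ktail F y with ha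
  have hlt : 2 * a.toReal < c.toReal := by
    have := ENNReal.toReal_lt_toReal (ENNReal.mul_ne_top (by simp) hfin) hct |>.2 hc1
    simpa using this
  set δ := c.toReal - 2 * a.toReal with hδ
  have hδ0 : 0 < δ := by linarith
  have t1 : ∀ᶠ γ in 𝓝 (0:ℝ), Real.exp γ * (δ/4) + (Real.exp γ - 1) * a.toReal < 2 * (δ/4) := by
    have : ContinuousAt (fun γ => Real.exp γ * (δ/4) + (Real.exp γ - 1) * a.toReal) 0 := by
      fun_prop
    apply this.eventually_lt_const
    simp; linarith
  have t2 : ∀ᶠ γ in 𝓝 (0:ℝ), c.toReal * (Real.exp (γ * x0) - 1) * a.toReal < δ^2 / 8 := by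
    have : ContinuousAt (fun γ => c.toReal * (Real.exp (γ * x0) - 1) * a.toReal) 0 := by
      fun_prop
    apply this.eventually_lt_const
    simp; positivity
  obtain ⟨γ, ⟨hg1, hg2⟩, hγ⟩ := (((t1.and t2).filter_mono nhdsWithin_le_nhds).and
    (self_mem_nhdsWithin : Ioi (0:ℝ) ∈ 𝓝[>] (0:ℝ))).exists
  have hγ : 0 < γ := hγ
  obtain ⟨n, hn1, hn2⟩ := uw_choose F hsupp hheavy hfin γ hγ (δ/4) (by positivity) hg1.le
  have hm := main_ineq F c x0 hx0 h γ hγ n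
  rw [← ha] at hm
  set U := ∫⁻ x, uw γ n x * ktail F x with hU
  have hUt : U ≠ ⊤ := ne_top_of_le_ne_top ENNReal.ofReal_ne_top hn2
  have hw : 0 ≤ Real.exp (γ * x0) - 1 := by
    have := Real.one_le_exp (mul_nonneg hγ.le hx0); linarith
  have r1 : δ / 4 ≤ U.toReal := (ENNReal.ofReal_le_iff_le_toReal hUt).1 hn1
  have r2 : U.toReal ≤ 2 * (δ / 4) := ENNReal.toReal_le_of_le_ofReal (by positivity) hn2
  have f1 : 2 * a * U ≠ ⊤ := ENNReal.mul_ne_top (ENNReal.mul_ne_top (by simp) hfin) hUt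
  have f2 : U * U ≠ ⊤ := ENNReal.mul_ne_top hUt hUt
  have f3 : c * ENNReal.ofReal (Real.exp (γ * x0) - 1) * a ≠ ⊤ :=
    ENNReal.mul_ne_top (ENNReal.mul_ne_top hct ENNReal.ofReal_ne_top) hfin
  have r3 := ENNReal.toReal_mono (ENNReal.add_ne_top.2 ⟨ENNReal.add_ne_top.2 ⟨f1, f2⟩, f3⟩) hm
  rw [ENNReal.toReal_add (ENNReal.add_ne_top.2 ⟨f1, f2⟩) f3, ENNReal.toReal_add f1 f2] at r3
  simp only [ENNReal.toReal_mul, ENNReal.toReal_ofReal hw, ENNReal.toReal_ofNat] at r3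
  have hcd : c.toReal = δ + 2 * a.toReal := by rw [hδ]; ring
  have r4 : δ * U.toReal ≤ U.toReal * U.toReal
      + c.toReal * (Real.exp (γ * x0) - 1) * a.toReal := by
    have : c.toReal * U.toReal = δ * U.toReal + 2 * a.toReal * U.toReal := by
      rw [hcd]; ring
    linarith
  nlinarith [mul_nonneg (sub_nonneg.2 r1) (sub_nonneg.2 r2), mul_nonneg hδ0.le (sub_nonneg.2 r1)]

/-- Lemma 4: for heavy-tailed F with mean a ∈ (0,∞],
liminf (1/F̄(x)) ∫_0^x F̄(x−y)F̄(y) dy = 2a. -/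
theorem stmt6 (F : MeasureTheory.Measure ℝ) [MeasureTheory.IsProbabilityMeasure F]
    (hsupp : F (Set.Iio 0) = 0) (hub : ∀ x : ℝ, tail F x ≠ 0)
    (hheavy : IsHeavyTailed F) :
    liminf (fun x : ℝ =>
        (∫⁻ y in Set.Ioc (0:ℝ) x, tail F (x - y) * tail F y) / tail F x) atTop
      = 2 * ∫⁻ y in Set.Ioi (0:ℝ), tail F y := by
  exact le_antisymm (upper_bd F hsupp hheavy) (lower_bd F hub)
end
end
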